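/- Let d ≥ 1. For k = 1, …, M let m_k ∈ ℝ^d and Σ_k be a positive definite d×d real matrix, and define q_k(x) = (2π)^{−d/2} (det Σ_k)^{−1/2} exp( −(1/2)(x − m_k)ᵀ Σ_k^{−1} (x − m_k) ). Let α_1, …, α_M > 0 with Σ_k α_k = 1, π(x) = Σ_k α_k q_k(x), and β ∈ (0,1]. Define r(x) = π(x)^β / ( Σ_k α_k q_k(x)^β ) and T_j = ∫_{ℝ^d} r(x) q_j(x)^β dx. Then for every j: α_j T_j / ( Σ_k α_k T_k ) ≥ ( α_j ∫ q_j(x)^β dx / ( Σ_k α_k ∫ q_k(x)^β dx ) ) · min_k α_k. In particular, if Σ_1 = ⋯ = Σ_M, then α_j T_j / ( Σ_k α_k T_k ) ≥ (min_k α_k)². -/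

import Mathlib

open MeasureTheory Matrix

/-!
The factor `r = π ^ β / ∑ k, α k * q k ^ β` lies between `1` and `(min α)⁻¹`: the lower bound is
Jensen's inequality for the concave function `t ↦ t ^ β`, and the upper bound holds because `π` is
at most the largest component `q l`, whose tempered term `α l * q l ^ β` occurs in the denominator.
Integrating against `q j ^ β` replaces each mass `∫ q j ^ β` by some `T j` that is at least as large
and at most `(min α)⁻¹` times larger, so normalising loses at most a factor `min α`. When all
covariances agree, the tempered components are translates of each other and have equal masses.
-/

section Gaussian

variable {n : Type*} [Fintype n] {A : Matrix n n ℝ} {C : ℝ}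

open scoped MatrixOrder in
lemma exists_pos_mul_dotProduct_self_le_of_posDef (hA : A.PosDef) :
    ∃ c : ℝ, 0 < c ∧ ∀ y : n → ℝ, c * (y ⬝ᵥ y) ≤ y ⬝ᵥ (A *ᵥ y) := by
  classical
  obtain _ | _ := isEmpty_or_nonempty n
  · exact ⟨1, one_pos, fun y => by simp [dotProduct]⟩
  obtain ⟨c, hc, hcA⟩ := (CFC.exists_pos_algebraMap_le_iff (ha := hA.isHermitian)).2
    fun x hx => hA.isStrictlyPositive.spectrum_pos hx
  refine ⟨c, hc, fun y => ?_⟩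
  have hsub := (Matrix.le_iff.1 hcA).dotProduct_mulVec_nonneg y
  simpa [Algebra.algebraMap_eq_smul_one, sub_mulVec, smul_mulVec] using hsub

/-- An unnormalized Gaussian with mean `m`, precision matrix `A` (the inverse of the covariance)
and amplitude `C`. The amplitude is arbitrary, so that powers of Gaussian densities are again of
this form. -/
noncomputable def gaussianFun (C : ℝ) (A : Matrix n n ℝ) (m x : n → ℝ) : ℝ :=
  C * Real.exp (-(1 / 2) * ((x - m) ⬝ᵥ (A *ᵥ (x - m))))

lemma continuous_gaussianFun (C : ℝ) (A : Matrix n n ℝ) (m : n → ℝ) :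
    Continuous (gaussianFun C A m) := by
  unfold gaussianFun
  fun_prop

lemma gaussianFun_pos (hC : 0 < C) (A : Matrix n n ℝ) (m x : n → ℝ) : 0 < gaussianFun C A m x :=
  mul_pos hC (Real.exp_pos _)

lemma gaussianFun_rpow (hC : 0 ≤ C) (A : Matrix n n ℝ) (m x : n → ℝ) (β : ℝ) :
    gaussianFun C A m x ^ β = gaussianFun (C ^ β) (β • A) m x := by
  rw [gaussianFun, gaussianFun, Real.mul_rpow hC (Real.exp_pos _).le, ← Real.exp_mul, smul_mulVec,
    dotProduct_smul, smul_eq_mul]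
  ring_nf

lemma integrable_exp_neg_mul_dotProduct_self {b : ℝ} (hb : 0 < b) :
    Integrable fun y : n → ℝ => Real.exp (-b * (y ⬝ᵥ y)) := by
  have hprod : Integrable fun y : n → ℝ => ∏ i, Real.exp (-b * y i ^ 2) :=
    .fintype_prod (f := fun _ t => Real.exp (-b * t ^ 2)) fun _ => integrable_exp_neg_mul_sq hb
  simpa only [dotProduct, Finset.mul_sum, Real.exp_sum, sq] using hprod

lemma integrable_gaussianFun (C : ℝ) (hA : A.PosDef) (m : n → ℝ) :
    Integrable (gaussianFun C A m) := by
  suffices hcentered : Integrable fun y : n → ℝ => Real.exp (-(1 / 2) * (y ⬝ᵥ (A *ᵥ y))) from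
    (hcentered.comp_sub_right m).const_mul C
  obtain ⟨c, hc, hcA⟩ := exists_pos_mul_dotProduct_self_le_of_posDef hA
  refine (integrable_exp_neg_mul_dotProduct_self (half_pos hc)).mono'
    (Continuous.aestronglyMeasurable (by fun_prop)) (.of_forall fun y => ?_)
  rw [Real.norm_eq_abs, Real.abs_exp, Real.exp_le_exp]
  linarith [hcA y]

lemma integral_gaussianFun_rpow_pos (hC : 0 < C) (hA : A.PosDef) (m : n → ℝ) {β : ℝ} (hβ : 0 < β) :
    0 < ∫ x, gaussianFun C A m x ^ β := by
  simp only [gaussianFun_rpow hC.le]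
  have hpos := gaussianFun_pos (Real.rpow_pos_of_pos hC β) (β • A) m
  exact integral_pos_of_integrable_nonneg_nonzero (x := 0) (continuous_gaussianFun ..)
    (integrable_gaussianFun _ (hA.smul hβ) m) (fun x => (hpos x).le) (hpos 0).ne'

lemma integral_comp_gaussianFun_eq (f : ℝ → ℝ) (C : ℝ) (A : Matrix n n ℝ) (m m' : n → ℝ) :
    ∫ x, f (gaussianFun C A m x) = ∫ x, f (gaussianFun C A m' x) :=
  (integral_sub_right_eq_self (fun y => f (C * Real.exp (-(1 / 2) * (y ⬝ᵥ (A *ᵥ y))))) m).trans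
    (integral_sub_right_eq_self _ m').symm

end Gaussian

section NormalizedWeights

variable {ι : Type*} [Fintype ι] {α I T : ι → ℝ} {a : ℝ} {j : ι}

/-- The normalized weight of component `j` in a mixture with coefficients `α` of unnormalized
components with total masses `Z`. -/
noncomputable def mixtureWeight (α Z : ι → ℝ) (j : ι) : ℝ :=
  α j * Z j / ∑ k, α k * Z k

lemma mixtureWeight_eq_of_forall_eq (hsum : ∑ k, α k = 1) (hI : ∀ k, I k = I j)
    (hj : I j ≠ 0) : mixtureWeight α I j = α j := by
  simp only [mixtureWeight, hI, ← Finset.sum_mul, hsum, one_mul, mul_div_cancel_right₀ _ hj]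

lemma mixtureWeight_mul_le (hα : ∀ k, 0 ≤ α k) (hI : 0 ≤ I j)
    (hIpos : 0 < ∑ k, α k * I k) (hIT : ∀ k, I k ≤ T k) (hTI : ∀ k, T k ≤ a⁻¹ * I k) :
    mixtureWeight α I j * a ≤ mixtureWeight α T j := by
  have hsum_le : ∑ k, α k * T k ≤ a⁻¹ * ∑ k, α k * I k := by
    rw [Finset.mul_sum]
    refine Finset.sum_le_sum fun k _ => ?_
    rw [mul_left_comm]
    exact mul_le_mul_of_nonneg_left (hTI k) (hα k)
  have hTpos : 0 < ∑ k, α k * T k :=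
    hIpos.trans_le (Finset.sum_le_sum fun k _ => mul_le_mul_of_nonneg_left (hIT k) (hα k))
  calc mixtureWeight α I j * a = α j * I j / (a⁻¹ * ∑ k, α k * I k) := by
        rw [mixtureWeight, mul_comm a⁻¹, ← div_div, div_inv_eq_mul]
    _ ≤ mixtureWeight α T j :=
        div_le_div₀ (mul_nonneg (hα j) (hI.trans (hIT j)))
          (mul_le_mul_of_nonneg_left (hIT j) (hα j)) hTpos hsum_le

end NormalizedWeights

section TemperingRatio

variable {ι X : Type*} [Fintype ι] {α : ι → ℝ} {β a : ℝ} {q : ι → X → ℝ} {x : X}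

/-- The factor `r(x) = π(x) ^ β / ∑ k, α k * q k x ^ β` comparing the tempered mixture
`π = ∑ k, α k * q k` with the mixture of the tempered components. It takes the junk value `0` where
the denominator vanishes, that is, for positive `α` and nonnegative `q`, where all the `q k x ^ β`
vanish. -/
noncomputable def temperingRatio (α : ι → ℝ) (β : ℝ) (q : ι → X → ℝ) (x : X) : ℝ :=
  (∑ k, α k * q k x) ^ β / ∑ k, α k * q k x ^ β

lemma one_le_temperingRatio (hβ0 : 0 ≤ β) (hβ1 : β ≤ 1) (hα : ∀ k, 0 ≤ α k)
    (hsum : ∑ k, α k = 1) (hq : ∀ k, 0 ≤ q k x) (hpos : 0 < ∑ k, α k * q k x ^ β) :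
    1 ≤ temperingRatio α β q x := by
  rw [temperingRatio, one_le_div hpos]
  simpa only [smul_eq_mul] using (Real.concaveOn_rpow hβ0 hβ1).le_map_sum
    (t := Finset.univ) (p := fun k => q k x) (fun k _ => hα k) hsum fun k _ => hq k

lemma temperingRatio_le_inv (hβ0 : 0 ≤ β) (ha : 0 < a) (haα : ∀ k, a ≤ α k)
    (hsum : ∑ k, α k = 1) (hq : ∀ k, 0 ≤ q k x) : temperingRatio α β q x ≤ a⁻¹ := by
  have hα k : 0 ≤ α k := ha.le.trans (haα k)
  have hterm k : 0 ≤ α k * q k x ^ β := mul_nonneg (hα k) (Real.rpow_nonneg (hq k) β)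
  refine div_le_of_le_mul₀ (Finset.sum_nonneg fun k _ => hterm k) (inv_nonneg.2 ha.le) ?_
  have : Nonempty ι := by
    by_contra h
    simp [not_nonempty_iff.1 h] at hsum
  obtain ⟨l, hl⟩ := Finite.exists_max fun k => q k x
  have hmean_le : ∑ k, α k * q k x ≤ q l x := by
    calc ∑ k, α k * q k x ≤ ∑ k, α k * q l x :=
          Finset.sum_le_sum fun k _ => mul_le_mul_of_nonneg_left (hl k) (hα k)
      _ = q l x := by rw [← Finset.sum_mul, hsum, one_mul]
  calc (∑ k, α k * q k x) ^ β ≤ q l x ^ β :=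
        Real.rpow_le_rpow (Finset.sum_nonneg fun k _ => mul_nonneg (hα k) (hq k)) hmean_le hβ0
    _ = a⁻¹ * (a * q l x ^ β) := (inv_mul_cancel_left₀ ha.ne' _).symm
    _ ≤ a⁻¹ * (α l * q l x ^ β) := by
        gcongr
        exacts [Real.rpow_nonneg (hq l) β, haα l]
    _ ≤ a⁻¹ * ∑ k, α k * q k x ^ β := by
        gcongr
        exact Finset.single_le_sum (f := fun k => α k * q k x ^ β)
          (fun k _ => hterm k) (Finset.mem_univ l)

lemma rpow_le_temperingRatio_mul (hβ0 : 0 ≤ β) (hβ1 : β ≤ 1) (hα : ∀ k, 0 < α k)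
    (hsum : ∑ k, α k = 1) (hq : ∀ k, 0 ≤ q k x) (j : ι) :
    q j x ^ β ≤ temperingRatio α β q x * q j x ^ β := by
  obtain hj | hj := (Real.rpow_nonneg (hq j) β).eq_or_lt
  · rw [← hj, mul_zero]
  · refine le_mul_of_one_le_left hj.le
      (one_le_temperingRatio hβ0 hβ1 (fun k => (hα k).le) hsum hq ?_)
    exact Finset.sum_pos' (fun k _ => mul_nonneg (hα k).le (Real.rpow_nonneg (hq k) β))
      ⟨j, Finset.mem_univ j, mul_pos (hα j) hj⟩

lemma temperingRatio_nonneg (hα : ∀ k, 0 ≤ α k) (hq : ∀ k, 0 ≤ q k x) :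
    0 ≤ temperingRatio α β q x :=
  div_nonneg (Real.rpow_nonneg (Finset.sum_nonneg fun k _ => mul_nonneg (hα k) (hq k)) β)
    (Finset.sum_nonneg fun k _ => mul_nonneg (hα k) (Real.rpow_nonneg (hq k) β))

variable [MeasurableSpace X] {μ : Measure X}

lemma aemeasurable_temperingRatio (hqm : ∀ k, AEMeasurable (q k) μ) :
    AEMeasurable (temperingRatio α β q) μ := by
  unfold temperingRatio
  fun_prop

lemma integrable_temperingRatio_mul_rpow (hβ0 : 0 ≤ β) (ha : 0 < a) (haα : ∀ k, a ≤ α k)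
    (hsum : ∑ k, α k = 1) (hq : ∀ k x, 0 ≤ q k x) (hqm : ∀ k, AEMeasurable (q k) μ) {j : ι}
    (hint : Integrable (fun x => q j x ^ β) μ) :
    Integrable (fun x => temperingRatio α β q x * q j x ^ β) μ := by
  refine hint.bdd_mul (c := a⁻¹) (aemeasurable_temperingRatio hqm).aestronglyMeasurable
    (.of_forall fun x => ?_)
  rw [Real.norm_of_nonneg (temperingRatio_nonneg (fun k => ha.le.trans (haα k)) (hq · x))]
  exact temperingRatio_le_inv hβ0 ha haα hsum (hq · x)

theorem stmt_18_general (hβ0 : 0 ≤ β) (hβ1 : β ≤ 1) (ha : 0 < a) (haα : ∀ k, a ≤ α k)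
    (hsum : ∑ k, α k = 1) (hq : ∀ k x, 0 ≤ q k x) (hqm : ∀ k, AEMeasurable (q k) μ)
    (hpos : ∀ k, 0 < ∫ x, q k x ^ β ∂μ) :
    (∀ j, mixtureWeight α (fun k => ∫ x, q k x ^ β ∂μ) j * a ≤
      mixtureWeight α (fun k => ∫ x, temperingRatio α β q x * q k x ^ β ∂μ) j) ∧
    ((∀ k l, ∫ x, q k x ^ β ∂μ = ∫ x, q l x ^ β ∂μ) → ∀ j,
      a ^ 2 ≤ mixtureWeight α (fun k => ∫ x, temperingRatio α β q x * q k x ^ β ∂μ) j) := by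
  have hα k : 0 < α k := ha.trans_le (haα k)
  have hint k : Integrable (fun x => q k x ^ β) μ := .of_integral_ne_zero (hpos k).ne'
  have hintr k := integrable_temperingRatio_mul_rpow hβ0 ha haα hsum hq hqm (hint k)
  have hlower k : ∫ x, q k x ^ β ∂μ ≤ ∫ x, temperingRatio α β q x * q k x ^ β ∂μ :=
    integral_mono (hint k) (hintr k)
      fun x => rpow_le_temperingRatio_mul hβ0 hβ1 hα hsum (hq · x) k
  have hupper k :
      ∫ x, temperingRatio α β q x * q k x ^ β ∂μ ≤ a⁻¹ * ∫ x, q k x ^ β ∂μ := by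
    rw [← integral_const_mul]
    exact integral_mono (hintr k) ((hint k).const_mul _) fun x =>
      mul_le_mul_of_nonneg_right (temperingRatio_le_inv hβ0 ha haα hsum (hq · x))
        (Real.rpow_nonneg (hq k x) β)
  have hweight j := mixtureWeight_mul_le (j := j) (fun k => (hα k).le) (hpos j).le
    (Finset.sum_pos (fun k _ => mul_pos (hα k) (hpos k)) ⟨j, Finset.mem_univ j⟩) hlower hupper
  refine ⟨hweight, fun heq j => ?_⟩
  calc a ^ 2 = a * a := sq a
    _ ≤ α j * a := mul_le_mul_of_nonneg_right (haα j) ha.le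
    _ = mixtureWeight α (fun k => ∫ x, q k x ^ β ∂μ) j * a := by
        rw [mixtureWeight_eq_of_forall_eq hsum (heq · j) (hpos j).ne']
    _ ≤ _ := hweight j

end TemperingRatio

theorem stmt_18 (d M : ℕ) (hd : 1 ≤ d)
    (m : Fin M → (Fin d → ℝ))
    (S : Fin M → Matrix (Fin d) (Fin d) ℝ) (hS : ∀ k, (S k).PosDef)
    (α : Fin M → ℝ) (hα : ∀ k, 0 < α k) (hsum : ∑ k, α k = 1)
    (q : Fin M → (Fin d → ℝ) → ℝ)
    (hq : ∀ k x, q k x = (2 * Real.pi) ^ (-(d : ℝ) / 2) * (S k).det ^ (-(1 : ℝ) / 2) *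
      Real.exp (-(1 / 2) * ((x - m k) ⬝ᵥ ((S k)⁻¹ *ᵥ (x - m k)))))
    (π : (Fin d → ℝ) → ℝ) (hπ : ∀ x, π x = ∑ k, α k * q k x)
    (β : ℝ) (hβ0 : 0 < β) (hβ1 : β ≤ 1)
    (r : (Fin d → ℝ) → ℝ) (hr : ∀ x, r x = π x ^ β / ∑ k, α k * q k x ^ β)
    (T : Fin M → ℝ) (hT : ∀ j, T j = ∫ x, r x * q j x ^ β)
    (αmin : ℝ) (hαmin : IsLeast (Set.range α) αmin) :
    (∀ j, α j * T j / (∑ k, α k * T k)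
      ≥ (α j * (∫ x, q j x ^ β) / ∑ k, α k * ∫ x, q k x ^ β) * αmin) ∧
    ((∀ k l, S k = S l) → ∀ j, α j * T j / (∑ k, α k * T k) ≥ αmin ^ 2) := by
  let C : Fin M → ℝ := fun k => (2 * Real.pi) ^ (-(d : ℝ) / 2) * (S k).det ^ (-(1 : ℝ) / 2)
  have hC k : 0 < C k :=
    mul_pos (Real.rpow_pos_of_pos Real.two_pi_pos _) (Real.rpow_pos_of_pos (hS k).det_pos _)
  have hqG k : q k = gaussianFun (C k) (S k)⁻¹ (m k) := funext (hq k)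
  obtain rfl : π = _ := funext hπ
  obtain rfl : r = temperingRatio α β q := funext hr
  obtain rfl : T = _ := funext hT
  obtain ⟨⟨k₀, rfl⟩, hle⟩ := hαmin
  obtain ⟨hweight, hweight_of_eq⟩ := stmt_18_general (q := q) (μ := volume) hβ0.le hβ1 (hα k₀)
    (fun k => hle ⟨k, rfl⟩) hsum (fun k x => hqG k ▸ (gaussianFun_pos (hC k) _ _ x).le)
    (fun k => hqG k ▸ (continuous_gaussianFun ..).aemeasurable)
    (fun k => hqG k ▸ integral_gaussianFun_rpow_pos (hC k) (hS k).inv (m k) hβ0)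
  refine ⟨hweight, fun hSeq => hweight_of_eq fun k l => ?_⟩
  simp only [hqG, C, hSeq k l]
  exact integral_comp_gaussianFun_eq (· ^ β) ..
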